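/- Let k ≥ 2 be an integer, 0 < θ < 1, τ = θ + θ^{-1}, and let a, b > 0 satisfy the system (a + b − τ)·b^k + τ·b − 2 = 0 and (a + b − τ)·a^k + τ·a − 2 = 0 with a + b ≠ τ. Define u : ℤ → ℝ by u_n = 1 if n is even, u_n = a if n ≡ 3 (mod 4), u_n = b if n ≡ 1 (mod 4). Then Σ_{j∈ℤ} θ^{|j|}·u_j^k = (θ − θ^{-1})/(a + b − τ); in particular, this sum is finite and equals 1 + ((θ + θ^3)·(a^k + b^k) + 2·θ^2 + 2·θ^4)/(1 − θ^4). -/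

import Mathlib

open scoped BigOperators

/- Splitting the two-sided series by the residue of `j` modulo `4` turns it into geometric series
of ratio `θ ^ 4`, which gives the closed form; with `A = a ^ k` and `B = b ^ k` it simplifies to
`(A + B + τ) / (θ⁻¹ - θ)`. Adding the two equations of the system gives
`(a + b - τ) * (A + B + τ) = 4 - τ ^ 2 = -(θ - θ⁻¹) ^ 2`, and dividing yields the value
`(θ - θ⁻¹) / (a + b - τ)`. -/

open Finset Function

section ResidueClasses

variable {M : Type*} [AddCommMonoid M] [TopologicalSpace M]

theorem hasSum_ite_mod_eq {N r : ℕ} (hr : r < N) {f : ℕ → M} {s : M}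
    (hf : HasSum (fun m => f (r + N * m)) s) :
    HasSum (fun n => if r = n % N then f n else 0) s := by
  have hinj : Injective fun m => r + N * m := fun _ _ h =>
    Nat.eq_of_mul_eq_mul_left (by omega) (Nat.add_left_cancel h)
  refine (hinj.hasSum_iff fun n hn => if_neg fun h => hn ⟨n / N, ?_⟩).mp ?_
  · simp only [h, Nat.mod_add_div]
  · simpa only [comp_def, Nat.add_mul_mod_self_left, Nat.mod_eq_of_lt hr, if_true] using hf

theorem hasSum_of_forall_residueClass [ContinuousAdd M] {N : ℕ} (hN : N ≠ 0) {f s : ℕ → M}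
    (hf : ∀ r < N, HasSum (fun m => f (r + N * m)) (s r)) :
    HasSum f (∑ r ∈ range N, s r) := by
  have h := hasSum_sum fun r hr => hasSum_ite_mod_eq (mem_range.mp hr) (hf r (mem_range.mp hr))
  simpa only [sum_ite_eq', mem_range, Nat.mod_lt _ (Nat.pos_of_ne_zero hN), if_true] using h

end ResidueClasses

section NormedDivisionRing

variable {K : Type*} [NormedDivisionRing K] {θ : K} {n : ℕ}

theorem norm_pow_lt_one (hθ : ‖θ‖ < 1) (hn : n ≠ 0) : ‖θ ^ n‖ < 1 :=
  norm_pow θ n ▸ pow_lt_one₀ (norm_nonneg θ) hθ hn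

theorem pow_ne_one_of_norm_lt_one (hθ : ‖θ‖ < 1) (hn : n ≠ 0) : θ ^ n ≠ 1 :=
  ne_of_apply_ne norm <| by simpa only [norm_one] using (norm_pow_lt_one hθ hn).ne

end NormedDivisionRing

section PeriodicWeights

variable {K E : Type*} [NormedDivisionRing K] [AddCommMonoid E] [Module K E]
  [TopologicalSpace E] [ContinuousAdd E] [ContinuousSMul K E] {θ : K} {N : ℕ}

theorem hasSum_pow_smul_of_periodic (hθ : ‖θ‖ < 1) (hN : N ≠ 0) {f : ℕ → E}
    (hf : Periodic f N) :
    HasSum (fun n => θ ^ n • f n) ((1 - θ ^ N)⁻¹ • ∑ r ∈ range N, θ ^ r • f r) := by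
  have hgeom : HasSum (fun m => (θ ^ N) ^ m) (1 - θ ^ N)⁻¹ :=
    hasSum_geometric_of_norm_lt_one (norm_pow_lt_one hθ hN)
  rw [smul_sum]
  refine hasSum_of_forall_residueClass hN fun r _ => ?_
  have hterm (m : ℕ) : θ ^ (r + N * m) • f (r + N * m) = (θ ^ N) ^ m • θ ^ r • f r := by
    have hshift : f (r + N * m) = f r := by
      simpa only [smul_eq_mul, mul_comm N m] using hf.nsmul m r
    rw [hshift, smul_smul, ← pow_mul, ← pow_add, add_comm]
  simpa only [hterm] using hgeom.smul_const (θ ^ r • f r)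

theorem hasSum_pow_natAbs_smul_of_periodic (hθ : ‖θ‖ < 1) (hN : N ≠ 0) {f : ℤ → E}
    (hf : Periodic f N) :
    HasSum (fun j => θ ^ j.natAbs • f j)
      ((1 - θ ^ N)⁻¹ • ∑ r ∈ range N, (θ ^ r • f r + θ ^ (r + 1) • f (-(r + 1)))) := by
  have hpos : Periodic (fun n : ℕ => f n) N := fun n => by
    simpa only [Nat.cast_add] using hf n
  have hneg : Periodic (fun n : ℕ => θ • f (-(n + 1))) N := fun n => by
    have hshift : -((n + N : ℕ) + 1 : ℤ) = -(n + 1) - N := by push_cast; ring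
    simp only [hshift, hf.sub_eq]
  rw [sum_add_distrib, smul_add]
  refine .of_nat_of_neg_add_one (by simpa using hasSum_pow_smul_of_periodic hθ hN hpos) ?_
  have hnatAbs (n : ℕ) : (-(n + 1 : ℤ)).natAbs = n + 1 := by omega
  simpa only [hnatAbs, pow_succ, mul_smul] using hasSum_pow_smul_of_periodic hθ hN hneg

end PeriodicWeights

section HeightPeriodic

/-- The `4`-periodic sequence `…, 1, b, 1, a, …` with value `1` at even heights, `a` at heights
`3` mod `4` and `b` at heights `1` mod `4`: the shape of a height-periodic boundary law of
period `4`. -/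
def heightPeriodicFour {R : Type*} [One R] (a b : R) (n : ℤ) : R :=
  if n % 2 = 0 then 1 else if n % 4 = 3 then a else b

theorem periodic_heightPeriodicFour {R : Type*} [One R] (a b : R) :
    Periodic (heightPeriodicFour a b) 4 := fun n => by
  simp only [heightPeriodicFour, Int.add_emod_right, show (n + 4) % 2 = n % 2 by omega]

theorem heightPeriodicFour_pow {R : Type*} [Monoid R] (a b : R) (n : ℤ) (k : ℕ) :
    heightPeriodicFour a b n ^ k = heightPeriodicFour (a ^ k) (b ^ k) n := by
  simp only [heightPeriodicFour, ite_pow, one_pow]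

theorem hasSum_pow_natAbs_mul_heightPeriodicFour {K : Type*} [NormedField K] {θ : K}
    (hθ : ‖θ‖ < 1) (a b : K) :
    HasSum (fun j : ℤ => θ ^ j.natAbs * heightPeriodicFour a b j)
      (1 + ((θ + θ ^ 3) * (a + b) + 2 * θ ^ 2 + 2 * θ ^ 4) / (1 - θ ^ 4)) := by
  have hθ4 : 1 - θ ^ 4 ≠ 0 := sub_ne_zero.mpr (pow_ne_one_of_norm_lt_one hθ four_ne_zero).symm
  have hperiod : ∑ r ∈ range 4, (θ ^ r • heightPeriodicFour a b r +
      θ ^ (r + 1) • heightPeriodicFour a b (-(r + 1))) =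
      (1 + θ * a) + (θ * b + θ ^ 2) + (θ ^ 2 + θ ^ 3 * b) + (θ ^ 3 * a + θ ^ 4) := by
    simp only [sum_range_succ, range_zero, sum_empty]
    norm_num [heightPeriodicFour]
  have hvalue : 1 + ((θ + θ ^ 3) * (a + b) + 2 * θ ^ 2 + 2 * θ ^ 4) / (1 - θ ^ 4) =
      (1 - θ ^ 4)⁻¹ • ∑ r ∈ range 4, (θ ^ r • heightPeriodicFour a b r +
        θ ^ (r + 1) • heightPeriodicFour a b (-(r + 1))) := by
    rw [hperiod, smul_eq_mul]
    field_simp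
    ring
  rw [hvalue]
  exact hasSum_pow_natAbs_smul_of_periodic hθ four_ne_zero (periodic_heightPeriodicFour a b)

end HeightPeriodic

section BoundaryLawSystem

theorem add_sub_mul_add_pow_add {R : Type*} [CommRing R] {a b τ : R} {k : ℕ}
    (hb : (a + b - τ) * b ^ k + τ * b - 2 = 0) (ha : (a + b - τ) * a ^ k + τ * a - 2 = 0) :
    (a + b - τ) * (a ^ k + b ^ k + τ) = 4 - τ ^ 2 := by
  linear_combination hb + ha

variable {K : Type*} [Field K] {θ : K}

theorem four_sub_add_inv_sq (hθ : θ ≠ 0) : 4 - (θ + θ⁻¹) ^ 2 = -(θ - θ⁻¹) ^ 2 := by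
  linear_combination -4 * mul_inv_cancel₀ hθ

theorem sub_inv_ne_zero (hθ : θ ≠ 0) (hθ2 : θ ^ 2 ≠ 1) : θ - θ⁻¹ ≠ 0 := fun h =>
  hθ2 <| by linear_combination θ * h + mul_inv_cancel₀ hθ

theorem one_add_div_one_sub_pow_four (hθ : θ ≠ 0) (hθ4 : θ ^ 4 ≠ 1) (s : K) :
    1 + ((θ + θ ^ 3) * s + 2 * θ ^ 2 + 2 * θ ^ 4) / (1 - θ ^ 4) =
      (s + (θ + θ⁻¹)) / (θ⁻¹ - θ) := by
  have hfactor : 1 - θ ^ 4 = (1 + θ ^ 2) * (1 - θ ^ 2) := by ring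
  have hne : (1 + θ ^ 2) * (1 - θ ^ 2) ≠ 0 := hfactor ▸ sub_ne_zero.mpr hθ4.symm
  have hadd : 1 + θ ^ 2 ≠ 0 := left_ne_zero_of_mul hne
  have hsub : 1 - θ ^ 2 ≠ 0 := right_ne_zero_of_mul hne
  calc 1 + ((θ + θ ^ 3) * s + 2 * θ ^ 2 + 2 * θ ^ 4) / (1 - θ ^ 4)
      = (θ * s + θ ^ 2 + 1) / (1 - θ ^ 2) := by
        rw [hfactor]
        field_simp
        ring
    _ = (s + (θ + θ⁻¹)) / (θ⁻¹ - θ) := by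
        have hnum : θ * s + θ ^ 2 + 1 = θ * (s + (θ + θ⁻¹)) := by field_simp; ring
        have hden : 1 - θ ^ 2 = θ * (θ⁻¹ - θ) := by field_simp
        rw [hnum, hden, mul_div_mul_left _ _ hθ]

theorem add_pow_add_div_eq_div {a b : K} {k : ℕ} (hθ : θ ≠ 0) (hθ2 : θ ^ 2 ≠ 1)
    (hb : (a + b - (θ + θ⁻¹)) * b ^ k + (θ + θ⁻¹) * b - 2 = 0)
    (ha : (a + b - (θ + θ⁻¹)) * a ^ k + (θ + θ⁻¹) * a - 2 = 0) :
    (a ^ k + b ^ k + (θ + θ⁻¹)) / (θ⁻¹ - θ) = (θ - θ⁻¹) / (a + b - (θ + θ⁻¹)) := by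
  have hprod := (add_sub_mul_add_pow_add hb ha).trans (four_sub_add_inv_sq hθ)
  have hsub := sub_inv_ne_zero hθ hθ2
  have hab : a + b - (θ + θ⁻¹) ≠ 0 :=
    left_ne_zero_of_mul (hprod ▸ neg_ne_zero.mpr (pow_ne_zero 2 hsub))
  rw [div_eq_div_iff (by rwa [← neg_sub, neg_ne_zero]) hab]
  linear_combination hprod

end BoundaryLawSystem

theorem stmt17_general {K : Type*} [NormedField K] (k : ℕ) (θ : K) (hθ0 : θ ≠ 0) (hθ1 : ‖θ‖ < 1)
    (τ : K) (hτ : τ = θ + θ⁻¹) (a b : K)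
    (hb : (a + b - τ) * b ^ k + τ * b - 2 = 0)
    (ha : (a + b - τ) * a ^ k + τ * a - 2 = 0)
    (u : ℤ → K)
    (hu : ∀ n : ℤ, u n = if n % 2 = 0 then 1 else if n % 4 = 3 then a else b) :
    Summable (fun j : ℤ => θ ^ j.natAbs * u j ^ k) ∧
      (∑' j : ℤ, θ ^ j.natAbs * u j ^ k) = (θ - θ⁻¹) / (a + b - τ) ∧
      (∑' j : ℤ, θ ^ j.natAbs * u j ^ k) =
        1 + ((θ + θ ^ 3) * (a ^ k + b ^ k) + 2 * θ ^ 2 + 2 * θ ^ 4) / (1 - θ ^ 4) := by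
  obtain rfl : u = heightPeriodicFour a b := funext hu
  subst hτ
  simp only [heightPeriodicFour_pow]
  have hsum := hasSum_pow_natAbs_mul_heightPeriodicFour hθ1 (a ^ k) (b ^ k)
  have hθ2 : θ ^ 2 ≠ 1 := pow_ne_one_of_norm_lt_one hθ1 two_ne_zero
  have hθ4 : θ ^ 4 ≠ 1 := pow_ne_one_of_norm_lt_one hθ1 four_ne_zero
  refine ⟨hsum.summable, hsum.tsum_eq.trans ?_, hsum.tsum_eq⟩
  rw [one_add_div_one_sub_pow_four hθ0 hθ4, add_pow_add_div_eq_div hθ0 hθ2 hb ha]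

/-- For `k ≥ 2`, `0 < θ < 1`, `τ = θ + θ⁻¹`, and positive
`a, b` solving system (ab) with `a + b ≠ τ`, the period-4 sequence `u`
satisfies `Σ_{j∈ℤ} θ^{|j|} u_j^k = (θ − θ⁻¹)/(a + b − τ)`; in particular the
sum is finite and equals
`1 + ((θ + θ^3)(a^k + b^k) + 2θ^2 + 2θ^4)/(1 − θ^4)`. -/
theorem stmt17 (k : ℕ) (hk : 2 ≤ k) (θ : ℝ) (hθ0 : 0 < θ) (hθ1 : θ < 1)
    (τ : ℝ) (hτ : τ = θ + θ⁻¹) (a b : ℝ) (ha : 0 < a) (hb : 0 < b)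
    (h1 : (a + b - τ) * b ^ k + τ * b - 2 = 0)
    (h2 : (a + b - τ) * a ^ k + τ * a - 2 = 0)
    (hne : a + b ≠ τ)
    (u : ℤ → ℝ)
    (hu : ∀ n : ℤ, u n = if n % 2 = 0 then 1 else if n % 4 = 3 then a else b) :
    Summable (fun j : ℤ => θ ^ j.natAbs * u j ^ k) ∧
      (∑' j : ℤ, θ ^ j.natAbs * u j ^ k) = (θ - θ⁻¹) / (a + b - τ) ∧
      (∑' j : ℤ, θ ^ j.natAbs * u j ^ k) =
        1 + ((θ + θ ^ 3) * (a ^ k + b ^ k) + 2 * θ ^ 2 + 2 * θ ^ 4) / (1 - θ ^ 4) := by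
  exact stmt17_general k θ hθ0.ne' (by rwa [Real.norm_of_nonneg hθ0.le]) τ hτ a b h1 h2 u hu
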